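/- The 7×7 integer matrix Q_7^c is positive definite, its determinant is det Q_7^c = 2·11^6, and its inhomogeneous minimum is μ(Q_7^c) = 15/2. Consequently its covering density is Θ(Q_7^c) = √((15/2)^7 / (2·11^6)) · κ_7. -/

import Mathlib

/-!
A linear change of coordinates (`toY`) turns `Q₇^c` into the form `q y = 11 |y|² + 3 (∑ yᵢ)²` and
`ℤ⁷` into the lattice `glued = ℤ⁷ + ℤ · (1/4, …, 1/4)`. Permutations of the coordinates and `-1`
preserve both, so the covering problem may be studied up to the group they generate together with
the lattice translations. Positive definiteness is clear from `q`, and the determinant comes from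
an explicit `LU` factorisation.

*Upper bound on the inhomogeneous minimum.* Up to this group there are three Delaunay simplices,
with circumcentres `cD`, `cE`, `cF` and squared circumradii `15/2`, `82/11`, `15/2`. The power of a
point `w` with respect to a circumsphere of centre `c` and squared radius `R²` is `q (w - c) - R²`.
Given `y`, choose `w` in its orbit so that the least of the three powers is as small as possible
(`exists_min_orb`, `power_proper`), attained say by the sphere of a simplex `S`. The simplices
adjacent to `S` are images of the three under the group, and the common facet of two adjacent
simplices spans the radical hyperplane of their circumspheres, so minimality puts `w` on the side
of `S` for each facet; hence `w ∈ S` (`covered_of_power_D`, `covered_of_power_E`,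
`covered_of_power_F`). If `μⱼ` are the barycentric coordinates of `w` in `S` and `vⱼ` its vertices,
then `∑ μⱼ q (w - vⱼ) = R² - q (w - c) ≤ R² ≤ 15/2`, so some vertex is within squared distance
`15/2` of `w` (`covered_of_weights`). In this way no classification of Delaunay polytopes is
needed: only the facet inequalities of three simplices are checked.

*Lower bound.* Every lattice point is at squared distance at least `15/2` from `cD` (`deep_hole`).
The coordinate sum splits the lattice into layers; those far from `cD` are excluded by the term
`3 (∑ yᵢ)²`, and in each of the remaining ones the bound is a nonnegative combination of the
inequalities `(n - a) (n - a - 1) ≥ 0`, valid for integers `n`, `a`.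
-/

open Matrix MeasureTheory

/-- The inhomogeneous minimum `μ(Q) = sup_x inf_{v ∈ ℤᵈ} Q[x - v]` of a quadratic form. -/
noncomputable def inhomMin {d : ℕ} (Q : Matrix (Fin d) (Fin d) ℝ) : ℝ :=
  ⨆ x : Fin d → ℝ, ⨅ v : Fin d → ℤ,
    (x - fun i => (v i : ℝ)) ⬝ᵥ (Q *ᵥ (x - fun i => (v i : ℝ)))

/-- The homogeneous minimum `λ(Q) = min_{v ∈ ℤᵈ, v ≠ 0} Q[v]` of a quadratic form. -/
noncomputable def homMin {d : ℕ} (Q : Matrix (Fin d) (Fin d) ℝ) : ℝ :=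
  ⨅ v : {w : Fin d → ℤ // w ≠ 0},
    (fun i => (v.1 i : ℝ)) ⬝ᵥ (Q *ᵥ fun i => (v.1 i : ℝ))

/-- `κ_d`, the Lebesgue volume of the `d`-dimensional Euclidean unit ball. -/
noncomputable def unitBallVol (d : ℕ) : ℝ :=
  (volume (Metric.ball (0 : EuclideanSpace ℝ (Fin d)) 1)).toReal

/-- The covering density `Θ(Q) = √(μ(Q)^d / det Q) · κ_d`. -/
noncomputable def covDensity {d : ℕ} (Q : Matrix (Fin d) (Fin d) ℝ) : ℝ :=
  Real.sqrt (inhomMin Q ^ d / Q.det) * unitBallVol d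


/-- The quadratic form `Q₇^c`. -/
def Q7c : Matrix (Fin 7) (Fin 7) ℝ :=
  !![12, 1, 1, 1, 1, 1, 5;
     1, 12, 1, 1, 1, 1, 5;
     1, 1, 12, 1, 1, 1, 5;
     1, 1, 1, 12, 1, 1, 5;
     1, 1, 1, 1, 12, 1, 5;
     1, 1, 1, 1, 1, 12, -6;
     5, 5, 5, 5, 5, -6, 14]

/-! ### The lattice in symmetric coordinates -/

/-- The form `11 |y|² + 3 (∑ yᵢ)²`: this is `Q₇^c` in the coordinates `toY`, in which it is
invariant under all permutations of the coordinates. -/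
def q (y : Fin 7 → ℝ) : ℝ := 11 * ∑ i, y i ^ 2 + 3 * (∑ i, y i) ^ 2

/-- The lattice `ℤ⁷ + ℤ · (1/4, …, 1/4)`, the image of the integer vectors under `toY`: the
vectors `m / 4` with `m` integral and all coordinates of `m` congruent modulo `4`. -/
def glued : AddSubgroup (Fin 7 → ℝ) where
  carrier := {l | ∃ m : Fin 7 → ℤ, (∀ i j, (4 : ℤ) ∣ m i - m j) ∧ ∀ i, l i = m i / 4}
  zero_mem' := ⟨0, by simp, by simp⟩
  add_mem' := by
    rintro a b ⟨m, hm, ha⟩ ⟨m', hm', hb⟩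
    refine ⟨fun i => m i + m' i, fun i j => ?_, fun i => ?_⟩
    · have h := hm i j
      have h' := hm' i j
      lia
    · rw [Pi.add_apply, ha, hb]
      push_cast
      ring
  neg_mem' := by
    rintro a ⟨m, hm, ha⟩
    refine ⟨fun i => -m i, fun i j => ?_, fun i => ?_⟩
    · have h := hm i j
      lia
    · rw [Pi.neg_apply, ha]
      push_cast
      ring

theorem mem_glued {l : Fin 7 → ℝ} : l ∈ glued ↔
    ∃ m : Fin 7 → ℤ, (∀ i j, (4 : ℤ) ∣ m i - m j) ∧ ∀ i, l i = m i / 4 := Iff.rfl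

theorem glued_perm {l : Fin 7 → ℝ} (hl : l ∈ glued) (τ : Equiv.Perm (Fin 7)) :
    (fun i => l (τ i)) ∈ glued := by
  obtain ⟨m, hm, h⟩ := hl
  exact ⟨fun i => m (τ i), fun i j => hm _ _, fun i => h _⟩

theorem glued_sign {l : Fin 7 → ℝ} (hl : l ∈ glued) {δ : ℝ} (hδ : δ = 1 ∨ δ = -1) :
    (fun i => δ * l i) ∈ glued := by
  rcases hδ with rfl | rfl
  · simpa using hl
  · have := glued.neg_mem hl
    convert this using 1
    ext i
    simp

theorem q_signed_perm (y : Fin 7 → ℝ) (τ : Equiv.Perm (Fin 7)) {δ : ℝ} (hδ : δ = 1 ∨ δ = -1) :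
    q (fun i => δ * y (τ i)) = q y := by
  have hδ2 : δ ^ 2 = 1 := by rcases hδ with rfl | rfl <;> norm_num
  unfold q
  rw [← Finset.mul_sum, Equiv.sum_comp τ y]
  simp_rw [mul_pow, hδ2, one_mul]
  rw [Equiv.sum_comp τ (fun i => y i ^ 2)]

theorem sq_le_q (y : Fin 7 → ℝ) (i : Fin 7) : 11 * y i ^ 2 ≤ q y := by
  have h1 : y i ^ 2 ≤ ∑ j, y j ^ 2 :=
    Finset.single_le_sum (f := fun j => y j ^ 2) (fun j _ => sq_nonneg _) (Finset.mem_univ i)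
  unfold q
  nlinarith [sq_nonneg (∑ j, y j)]

theorem q_nonneg (y : Fin 7 → ℝ) : 0 ≤ q y := by
  have := sq_le_q y 0
  nlinarith [sq_nonneg (y 0)]

/-- The orbit of `y` under the group generated by coordinate permutations, `-1` and the
translations by `glued`. -/
def orb (y : Fin 7 → ℝ) : Set (Fin 7 → ℝ) :=
  {w | ∃ (ε : ℝ) (σ : Equiv.Perm (Fin 7)), (ε = 1 ∨ ε = -1) ∧
    (fun i => w i - ε * y (σ i)) ∈ glued}

theorem self_mem_orb (y : Fin 7 → ℝ) : y ∈ orb y := by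
  refine ⟨1, 1, Or.inl rfl, ?_⟩
  have := glued.zero_mem
  convert this using 1
  ext i
  simp

theorem orb_trans {y w : Fin 7 → ℝ} (hw : w ∈ orb y) {δ : ℝ} (hδ : δ = 1 ∨ δ = -1)
    (τ : Equiv.Perm (Fin 7)) {l : Fin 7 → ℝ} (hl : l ∈ glued) :
    (fun i => δ * w (τ i) + l i) ∈ orb y := by
  obtain ⟨ε, σ, hε, h⟩ := hw
  refine ⟨δ * ε, τ.trans σ, ?_, ?_⟩
  · rcases hδ with rfl | rfl <;> rcases hε with rfl | rfl <;> norm_num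
  · have := glued.add_mem (glued_sign (glued_perm h τ) hδ) hl
    convert this using 1
    ext i
    simp only [Pi.add_apply, Equiv.trans_apply]
    ring

/-- `orb_trans` with the signed permutation and the translation given by explicit vectors. -/
theorem orb_step {y w : Fin 7 → ℝ} (hw : w ∈ orb y) (δ : ℝ) (hδ : δ = 1 ∨ δ = -1)
    (t : Fin 7 → Fin 7) (ht : Function.Bijective t) (m : Fin 7 → ℤ)
    (hm : ∀ i j, (4 : ℤ) ∣ m i - m j) (w' : Fin 7 → ℝ)
    (h : ∀ i, w' i = δ * w (t i) + m i / 4) : w' ∈ orb y := by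
  have := orb_trans hw hδ (Equiv.ofBijective t ht)
    (l := fun i => (m i : ℝ) / 4) ⟨m, hm, fun _ => rfl⟩
  convert this using 1
  ext i
  simp [h]

/-- The point `y` lies within squared distance `15/2` of the lattice `glued`. -/
def Covered (y : Fin 7 → ℝ) : Prop := ∃ l ∈ glued, q (y - l) ≤ 15 / 2

theorem covered_of_mem_orb {y w : Fin 7 → ℝ} (hw : w ∈ orb y) (h : Covered w) : Covered y := by
  obtain ⟨ε, σ, hε, hl⟩ := hw
  obtain ⟨l, hl', hq⟩ := h
  have hε2 : ε * ε = 1 := by rcases hε with rfl | rfl <;> norm_num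
  refine ⟨_, glued_perm (glued_sign (glued.sub_mem hl' hl) hε) σ.symm, ?_⟩
  rw [← q_signed_perm _ σ hε]
  convert hq using 2
  ext i
  simp only [Pi.sub_apply, Equiv.symm_apply_apply]
  linear_combination (-(l i - (w i - ε * y (σ i)))) * hε2

/-- A proper function attains its minimum on each orbit. -/
theorem exists_min_orb (Φ : (Fin 7 → ℝ) → ℝ)
    (hΦ : ∀ C, ∃ R, ∀ w, Φ w ≤ C → ∀ i, |w i| ≤ R) (y : Fin 7 → ℝ) :
    ∃ w ∈ orb y, ∀ w' ∈ orb y, Φ w ≤ Φ w' := by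
  obtain ⟨R, hR⟩ := hΦ (Φ y)
  obtain ⟨M, hM⟩ := exists_nat_ge (4 * (R + ∑ j, |y j|))
  have hfin : {w | w ∈ orb y ∧ Φ w ≤ Φ y}.Finite := by
    have hbox := Set.finite_Icc (fun _ : Fin 7 => -(M : ℤ)) (fun _ => (M : ℤ))
    have hpar : (({1, -1} : Set ℝ) ×ˢ ((Set.univ : Set (Equiv.Perm (Fin 7))) ×ˢ
        Set.Icc (fun _ : Fin 7 => -(M : ℤ)) (fun _ => (M : ℤ)))).Finite :=
      (Set.toFinite _).prod (Set.finite_univ.prod hbox)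
    refine (hpar.image fun p => fun i => p.1 * y (p.2.1 i) + (p.2.2 i : ℝ) / 4).subset ?_
    rintro w ⟨⟨ε, σ, hε, m, -, hm⟩, hw⟩
    have hb : ∀ i, |(m i : ℝ)| ≤ M := by
      intro i
      have h1 := hR w hw i
      have h2 : |ε * y (σ i)| ≤ ∑ j, |y j| := by
        have : |ε| = 1 := by rcases hε with rfl | rfl <;> simp
        rw [abs_mul, this, one_mul]
        exact Finset.single_le_sum (f := fun j => |y j|) (fun j _ => abs_nonneg _)
          (Finset.mem_univ (σ i))
      have h3 : (m i : ℝ) = 4 * (w i - ε * y (σ i)) := by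
        have := hm i
        simp only at this
        linarith
      rw [h3, abs_mul, abs_of_pos (by norm_num : (0 : ℝ) < 4)]
      have h4 := abs_sub (w i) (ε * y (σ i))
      linarith
    refine ⟨(ε, σ, m), ⟨by simpa using hε, Set.mem_univ _, ?_⟩, ?_⟩
    · constructor
      · intro i
        have := (abs_le.1 (hb i)).1
        exact_mod_cast this
      · intro i
        have := (abs_le.1 (hb i)).2
        exact_mod_cast this
    · ext i
      have := hm i
      simp only at this ⊢
      linarith
  obtain ⟨w, ⟨hw, hwy⟩, hmin⟩ := Set.exists_min_image _ Φ hfin ⟨y, self_mem_orb y, le_rfl⟩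
  refine ⟨w, hw, fun w' hw' => ?_⟩
  by_cases h : Φ w' ≤ Φ y
  · exact hmin w' ⟨hw', h⟩
  · exact hwy.trans (not_le.1 h).le

/-! ### The covering by Delaunay simplices -/

/-- If the convex combination of the squared distances from `w` to eight lattice points `V j / 4`
with weights `μ j` is at most `15/2`, then so is one of these distances. -/
theorem covered_of_weights (w : Fin 7 → ℝ) (V : Fin 8 → Fin 7 → ℤ)
    (hV : ∀ j i i', (4 : ℤ) ∣ V j i - V j i') (μ : Fin 8 → ℝ) (hμ : ∀ j, 0 ≤ μ j)
    (h1 : ∑ j, μ j = 1) (hq : ∑ j, μ j * q (fun i => w i - V j i / 4) ≤ 15 / 2) :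
    Covered w := by
  by_contra hc
  have hgt : ∀ j, 15 / 2 < q (fun i => w i - V j i / 4) := by
    intro j
    by_contra hj
    exact hc ⟨fun i => (V j i : ℝ) / 4, ⟨V j, hV j, fun _ => rfl⟩, not_lt.1 hj⟩
  obtain ⟨j, hj⟩ : ∃ j, 0 < μ j := by
    by_contra hn
    push Not at hn
    have := Finset.sum_nonpos (s := Finset.univ) fun j _ => hn j
    linarith
  have : ∑ j, μ j * (15 / 2) < ∑ j, μ j * q (fun i => w i - V j i / 4) :=
    Finset.sum_lt_sum (fun j _ => mul_le_mul_of_nonneg_left (hgt j).le (hμ j))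
      ⟨j, Finset.mem_univ j, mul_lt_mul_of_pos_left (hgt j) hj⟩
  rw [← Finset.sum_mul, h1] at this
  linarith

/-- The circumcentre of the first Delaunay simplex; it is a deep hole of the lattice. -/
noncomputable def cD : Fin 7 → ℝ := ![35/88, 35/88, 27/88, 11/88, -5/88, -13/88, -13/88]

/-- The circumcentre of the second Delaunay simplex, a hole of squared radius `82/11`. -/
noncomputable def cE : Fin 7 → ℝ := ![40/88, 40/88, 24/88, 16/88, 0, -16/88, -16/88]

/-- The circumcentre of the third Delaunay simplex, a hole of squared radius `15/2`. -/
noncomputable def cF : Fin 7 → ℝ := ![43/88, 43/88, 19/88, 11/88, 3/88, -21/88, -21/88]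

/-- The power of `w` with respect to the circumsphere of the first Delaunay simplex. -/
noncomputable def pD (w : Fin 7 → ℝ) : ℝ := q (w - cD) - 15 / 2

/-- The power of `w` with respect to the circumsphere of the second Delaunay simplex. -/
noncomputable def pE (w : Fin 7 → ℝ) : ℝ := q (w - cE) - 82 / 11

/-- The power of `w` with respect to the circumsphere of the third Delaunay simplex. -/
noncomputable def pF (w : Fin 7 → ℝ) : ℝ := q (w - cF) - 15 / 2

/-- The smallest of the powers of `w` with respect to the three circumspheres. -/
noncomputable def power (w : Fin 7 → ℝ) : ℝ := min (pD w) (min (pE w) (pF w))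

theorem bound_of_q_sub_le {w c : Fin 7 → ℝ} {C : ℝ} (hc : ∀ i, |c i| ≤ 1)
    (h : q (w - c) ≤ C) (i : Fin 7) : |w i| ≤ C + 2 := by
  have h1 := sq_le_q (w - c) i
  simp only [Pi.sub_apply] at h1
  have h2 : |w i - c i| ≤ C + 1 := by
    rw [abs_le]
    constructor <;> nlinarith [sq_nonneg (w i - c i - 1), sq_nonneg (w i - c i + 1)]
  have h3 := abs_sub_abs_le_abs_sub (w i) (c i)
  linarith [hc i]

theorem power_proper (C : ℝ) : ∃ R, ∀ w, power w ≤ C → ∀ i, |w i| ≤ R := by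
  refine ⟨C + 8 + 2, fun w hw i => ?_⟩
  simp only [power, min_le_iff] at hw
  rcases hw with h | h | h
  · refine bound_of_q_sub_le (c := cD) ?_ (by unfold pD at h; linarith) i
    intro i; rw [abs_le]; fin_cases i <;> norm_num [cD]
  · refine bound_of_q_sub_le (c := cE) ?_ (by unfold pE at h; linarith) i
    intro i; rw [abs_le]; fin_cases i <;> norm_num [cE]
  · refine bound_of_q_sub_le (c := cF) ?_ (by unfold pF at h; linarith) i
    intro i; rw [abs_le]; fin_cases i <;> norm_num [cF]

/-- The vertices of the first Delaunay simplex, multiplied by `4`. -/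
def vD : Fin 8 → Fin 7 → ℤ :=
  ![![0, 0, 0, 0, 0, 0, 0], ![1, 1, 1, 1, 1, 1, -3], ![1, 1, 1, 1, 1, -3, 1],
    ![1, 1, 1, 1, 1, 1, 1], ![0, 4, 0, 0, 0, 0, 0], ![4, 0, 0, 0, 0, 0, 0],
    ![2, 2, 2, 2, -2, -2, -2], ![3, 3, 3, -1, -1, -1, -1]]

/-- The vertices of the second Delaunay simplex, multiplied by `4`. -/
def vE : Fin 8 → Fin 7 → ℤ :=
  ![![1, 1, 1, 1, 1, 1, -3], ![1, 1, 1, 1, 1, -3, 1], ![1, 1, 1, 1, 1, 1, 1],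
    ![0, 4, 0, 0, 0, 0, 0], ![4, 0, 0, 0, 0, 0, 0], ![2, 2, 2, 2, -2, -2, -2],
    ![3, 3, 3, -1, -1, -1, -1], ![2, 2, 2, 2, 2, -2, -2]]

/-- The vertices of the third Delaunay simplex, multiplied by `4`. -/
def vF : Fin 8 → Fin 7 → ℤ :=
  ![![1, 1, 1, 1, 1, 1, -3], ![1, 1, 1, 1, 1, -3, 1], ![0, 4, 0, 0, 0, 0, 0],
    ![4, 0, 0, 0, 0, 0, 0], ![2, 2, 2, 2, -2, -2, -2], ![3, 3, 3, -1, -1, -1, -1],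
    ![2, 2, 2, 2, 2, -2, -2], ![3, 3, -1, -1, -1, -1, -1]]

/-- The hypotheses say that `w` has nonnegative barycentric coordinates in the first simplex. -/
theorem covered_D (w : Fin 7 → ℝ) (h0 : w 0 + w 1 + w 3 + w 4 ≤ 1) (h1 : w 6 ≤ w 4)
    (h2 : w 5 ≤ w 4) (h3 : 0 ≤ w 2 + w 3 + w 5 + w 6) (h4 : w 2 ≤ w 1) (h5 : w 2 ≤ w 0)
    (h6 : w 4 ≤ w 3) (h7 : w 3 ≤ w 2) : Covered w := by
  refine covered_of_weights w vD (by decide)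
    ![1 - w 0 - w 1 - w 3 - w 4, w 4 - w 6, w 4 - w 5, w 2 + w 3 + w 5 + w 6, w 1 - w 2,
      w 0 - w 2, w 3 - w 4, w 2 - w 3] ?_ ?_ ?_
  · intro j
    fin_cases j <;> simp <;> linarith
  · simp [Fin.sum_univ_succ]
    ring
  · refine le_of_eq_of_le (b := 15 / 2 - q (w - cD)) ?_ (by linarith [q_nonneg (w - cD)])
    simp [q, vD, cD, Fin.sum_univ_succ]
    ring

/-- The hypotheses say that `w` has nonnegative barycentric coordinates in the second simplex. -/
theorem covered_E (w : Fin 7 → ℝ) (h0 : w 0 + w 1 + w 3 + w 6 ≤ 1)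
    (h1 : w 0 + w 1 + w 3 + w 5 ≤ 1) (h2 : 0 ≤ w 2 + w 3 + w 5 + w 6) (h3 : w 2 ≤ w 1)
    (h4 : w 2 ≤ w 0) (h5 : w 4 ≤ w 3) (h6 : w 3 ≤ w 2) (h7 : 1 ≤ w 0 + w 1 + w 3 + w 4) :
    Covered w := by
  refine covered_of_weights w vE (by decide)
    ![1 - w 0 - w 1 - w 3 - w 6, 1 - w 0 - w 1 - w 3 - w 5, w 2 + w 3 + w 5 + w 6, w 1 - w 2,
      w 0 - w 2, w 3 - w 4, w 2 - w 3, w 0 + w 1 + w 3 + w 4 - 1] ?_ ?_ ?_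
  · intro j
    fin_cases j <;> simp <;> linarith
  · simp [Fin.sum_univ_succ]
    ring
  · refine le_of_eq_of_le (b := 82 / 11 - q (w - cE)) ?_ (by linarith [q_nonneg (w - cE)])
    simp [q, vE, cE, Fin.sum_univ_succ]
    ring

/-- The hypotheses say that `w` has nonnegative barycentric coordinates in the third simplex. -/
theorem covered_F (w : Fin 7 → ℝ) (h0 : w 0 + w 1 + w 3 + w 6 ≤ 1)
    (h1 : w 0 + w 1 + w 3 + w 5 ≤ 1) (h2 : 0 ≤ w 1 + w 3 + w 5 + w 6)
    (h3 : 0 ≤ w 0 + w 3 + w 5 + w 6) (h4 : w 4 ≤ w 3) (h5 : w 3 ≤ w 2)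
    (h6 : 1 ≤ w 0 + w 1 + w 3 + w 4) (h7 : w 2 + w 3 + w 5 + w 6 ≤ 0) : Covered w := by
  refine covered_of_weights w vF (by decide)
    ![1 - w 0 - w 1 - w 3 - w 6, 1 - w 0 - w 1 - w 3 - w 5, w 1 + w 3 + w 5 + w 6,
      w 0 + w 3 + w 5 + w 6, w 3 - w 4, w 2 - w 3, w 0 + w 1 + w 3 + w 4 - 1,
      -(w 2 + w 3 + w 5 + w 6)] ?_ ?_ ?_
  · intro j
    fin_cases j <;> simp <;> linarith
  · simp [Fin.sum_univ_succ]
    ring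
  · refine le_of_eq_of_le (b := 15 / 2 - q (w - cF)) ?_ (by linarith [q_nonneg (w - cF)])
    simp [q, vF, cF, Fin.sum_univ_succ]
    ring

theorem orb_subset {y w w' : Fin 7 → ℝ} (hw : w ∈ orb y) (hw' : w' ∈ orb w) : w' ∈ orb y := by
  obtain ⟨ε, σ, hε, h⟩ := hw'
  have := orb_trans hw hε σ h
  convert this using 1
  ext i
  ring

/-! ### The facets of the three simplices -/

theorem swap_02_mem (w : Fin 7 → ℝ) :
    (![w 2, w 1, w 0, w 3, w 4, w 5, w 6] : Fin 7 → ℝ) ∈ orb w := by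
  refine orb_step (self_mem_orb w) 1 (Or.inl rfl) ![2, 1, 0, 3, 4, 5, 6] (by decide)
    ![0, 0, 0, 0, 0, 0, 0] (by decide) _ fun i => ?_
  fin_cases i <;> simp

theorem swap_12_mem (w : Fin 7 → ℝ) :
    (![w 0, w 2, w 1, w 3, w 4, w 5, w 6] : Fin 7 → ℝ) ∈ orb w := by
  refine orb_step (self_mem_orb w) 1 (Or.inl rfl) ![0, 2, 1, 3, 4, 5, 6] (by decide)
    ![0, 0, 0, 0, 0, 0, 0] (by decide) _ fun i => ?_
  fin_cases i <;> simp

theorem swap_23_mem (w : Fin 7 → ℝ) :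
    (![w 0, w 1, w 3, w 2, w 4, w 5, w 6] : Fin 7 → ℝ) ∈ orb w := by
  refine orb_step (self_mem_orb w) 1 (Or.inl rfl) ![0, 1, 3, 2, 4, 5, 6] (by decide)
    ![0, 0, 0, 0, 0, 0, 0] (by decide) _ fun i => ?_
  fin_cases i <;> simp

theorem swap_34_mem (w : Fin 7 → ℝ) :
    (![w 0, w 1, w 2, w 4, w 3, w 5, w 6] : Fin 7 → ℝ) ∈ orb w := by
  refine orb_step (self_mem_orb w) 1 (Or.inl rfl) ![0, 1, 2, 4, 3, 5, 6] (by decide)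
    ![0, 0, 0, 0, 0, 0, 0] (by decide) _ fun i => ?_
  fin_cases i <;> simp

theorem swap_45_mem (w : Fin 7 → ℝ) :
    (![w 0, w 1, w 2, w 3, w 5, w 4, w 6] : Fin 7 → ℝ) ∈ orb w := by
  refine orb_step (self_mem_orb w) 1 (Or.inl rfl) ![0, 1, 2, 3, 5, 4, 6] (by decide)
    ![0, 0, 0, 0, 0, 0, 0] (by decide) _ fun i => ?_
  fin_cases i <;> simp

theorem swap_46_mem (w : Fin 7 → ℝ) :
    (![w 0, w 1, w 2, w 3, w 6, w 5, w 4] : Fin 7 → ℝ) ∈ orb w := by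
  refine orb_step (self_mem_orb w) 1 (Or.inl rfl) ![0, 1, 2, 3, 6, 5, 4] (by decide)
    ![0, 0, 0, 0, 0, 0, 0] (by decide) _ fun i => ?_
  fin_cases i <;> simp

theorem reflect_mem (w : Fin 7 → ℝ) :
    (![-w 5 + 1/4, -w 6 + 1/4, -w 4 + 1/4, -w 3 + 1/4, -w 2 + 1/4, -w 0 + 1/4, -w 1 + 1/4] :
      Fin 7 → ℝ) ∈ orb w := by
  refine orb_step (self_mem_orb w) (-1) (Or.inr rfl) ![5, 6, 4, 3, 2, 0, 1] (by decide)
    ![1, 1, 1, 1, 1, 1, 1] (by decide) _ fun i => ?_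
  fin_cases i <;> simp

theorem flip_mem (w : Fin 7 → ℝ) :
    (![-w 0 + 1, -w 1 + 1, -w 5, -w 6, -w 4, -w 2, -w 3] :
      Fin 7 → ℝ) ∈ orb w := by
  refine orb_step (self_mem_orb w) (-1) (Or.inr rfl) ![0, 1, 5, 6, 4, 2, 3] (by decide)
    ![4, 4, 0, 0, 0, 0, 0] (by decide) _ fun i => ?_
  fin_cases i <;> simp

theorem flip_mem' (w : Fin 7 → ℝ) :
    (![-w 0 + 1, -w 1 + 1, -w 6, -w 5, -w 4, -w 2, -w 3] :
      Fin 7 → ℝ) ∈ orb w := by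
  refine orb_step (self_mem_orb w) (-1) (Or.inr rfl) ![0, 1, 6, 5, 4, 2, 3] (by decide)
    ![4, 4, 0, 0, 0, 0, 0] (by decide) _ fun i => ?_
  fin_cases i <;> simp

theorem shift_mem (w : Fin 7 → ℝ) :
    (![w 5 + 3/4, w 6 + 3/4, w 0 - 1/4, w 1 - 1/4, w 2 - 1/4, w 3 - 1/4, w 4 - 1/4] :
      Fin 7 → ℝ) ∈ orb w := by
  refine orb_step (self_mem_orb w) 1 (Or.inl rfl) ![5, 6, 0, 1, 2, 3, 4] (by decide)
    ![3, 3, -1, -1, -1, -1, -1] (by decide) _ fun i => ?_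
  fin_cases i <;> simp <;> ring

theorem shift_mem' (w : Fin 7 → ℝ) :
    (![w 5 + 3/4, w 6 + 3/4, w 1 - 1/4, w 0 - 1/4, w 2 - 1/4, w 3 - 1/4, w 4 - 1/4] :
      Fin 7 → ℝ) ∈ orb w := by
  refine orb_step (self_mem_orb w) 1 (Or.inl rfl) ![5, 6, 1, 0, 2, 3, 4] (by decide)
    ![3, 3, -1, -1, -1, -1, -1] (by decide) _ fun i => ?_
  fin_cases i <;> simp <;> ring

/-- If the power of `w` to the first circumsphere is at most every power of every point of its
orbit, then `w` lies in the first simplex: each facet spans the radical hyperplane of this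
circumsphere and that of the simplex on the other side, which is an image of one of the three. -/
theorem covered_of_power_D (w : Fin 7 → ℝ) (h : ∀ w' ∈ orb w, pD w ≤ power w') : Covered w := by
  have hD : ∀ w' ∈ orb w, pD w ≤ pD w' := fun w' hw' =>
    (h w' hw').trans (min_le_left _ _)
  have hE : ∀ w' ∈ orb w, pD w ≤ pE w' := fun w' hw' =>
    (h w' hw').trans ((min_le_right _ _).trans (min_le_left _ _))
  apply covered_D
  · have hf := hE _ (self_mem_orb w)
    simp [pD, pE, q, cD, cE, Fin.sum_univ_succ] at hf
    linarith
  · have hf := hD _ (swap_46_mem w)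
    simp [pD, q, cD, Fin.sum_univ_succ] at hf
    linarith
  · have hf := hD _ (swap_45_mem w)
    simp [pD, q, cD, Fin.sum_univ_succ] at hf
    linarith
  · have hf := hE _ (reflect_mem w)
    simp [pD, pE, q, cD, cE, Fin.sum_univ_succ] at hf
    linarith
  · have hf := hD _ (swap_12_mem w)
    simp [pD, q, cD, Fin.sum_univ_succ] at hf
    linarith
  · have hf := hD _ (swap_02_mem w)
    simp [pD, q, cD, Fin.sum_univ_succ] at hf
    linarith
  · have hf := hD _ (swap_34_mem w)
    simp [pD, q, cD, Fin.sum_univ_succ] at hf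
    linarith
  · have hf := hD _ (swap_23_mem w)
    simp [pD, q, cD, Fin.sum_univ_succ] at hf
    linarith

/-- If the power of `w` to the second circumsphere is at most every power of every point of its
orbit, then `w` lies in the second simplex: each facet spans the radical hyperplane of this
circumsphere and that of the simplex on the other side, which is an image of one of the three. -/
theorem covered_of_power_E (w : Fin 7 → ℝ) (h : ∀ w' ∈ orb w, pE w ≤ power w') : Covered w := by
  have hD : ∀ w' ∈ orb w, pE w ≤ pD w' := fun w' hw' =>
    (h w' hw').trans (min_le_left _ _)
  have hE : ∀ w' ∈ orb w, pE w ≤ pE w' := fun w' hw' =>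
    (h w' hw').trans ((min_le_right _ _).trans (min_le_left _ _))
  have hF : ∀ w' ∈ orb w, pE w ≤ pF w' := fun w' hw' =>
    (h w' hw').trans ((min_le_right _ _).trans (min_le_right _ _))
  apply covered_E
  · have hf := hF _ (flip_mem w)
    simp [pE, pF, q, cE, cF, Fin.sum_univ_succ] at hf
    linarith
  · have hf := hF _ (flip_mem' w)
    simp [pE, pF, q, cE, cF, Fin.sum_univ_succ] at hf
    linarith
  · have hf := hF _ (self_mem_orb w)
    simp [pE, pF, q, cE, cF, Fin.sum_univ_succ] at hf
    linarith
  · have hf := hE _ (swap_12_mem w)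
    simp [pE, q, cE, Fin.sum_univ_succ] at hf
    linarith
  · have hf := hE _ (swap_02_mem w)
    simp [pE, q, cE, Fin.sum_univ_succ] at hf
    linarith
  · have hf := hE _ (swap_34_mem w)
    simp [pE, q, cE, Fin.sum_univ_succ] at hf
    linarith
  · have hf := hE _ (swap_23_mem w)
    simp [pE, q, cE, Fin.sum_univ_succ] at hf
    linarith
  · have hf := hD _ (self_mem_orb w)
    simp [pE, pD, q, cE, cD, Fin.sum_univ_succ] at hf
    linarith

/-- If the power of `w` to the third circumsphere is at most every power of every point of its
orbit, then `w` lies in the third simplex: each facet spans the radical hyperplane of this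
circumsphere and that of the simplex on the other side, which is an image of one of the three. -/
theorem covered_of_power_F (w : Fin 7 → ℝ) (h : ∀ w' ∈ orb w, pF w ≤ power w') : Covered w := by
  have hE : ∀ w' ∈ orb w, pF w ≤ pE w' := fun w' hw' =>
    (h w' hw').trans ((min_le_right _ _).trans (min_le_left _ _))
  have hF : ∀ w' ∈ orb w, pF w ≤ pF w' := fun w' hw' =>
    (h w' hw').trans ((min_le_right _ _).trans (min_le_right _ _))
  apply covered_F
  · have hf := hE _ (flip_mem w)
    simp [pF, pE, q, cF, cE, Fin.sum_univ_succ] at hf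
    linarith
  · have hf := hE _ (flip_mem' w)
    simp [pF, pE, q, cF, cE, Fin.sum_univ_succ] at hf
    linarith
  · have hf := hE _ (shift_mem w)
    simp [pF, pE, q, cF, cE, Fin.sum_univ_succ] at hf
    linarith
  · have hf := hE _ (shift_mem' w)
    simp [pF, pE, q, cF, cE, Fin.sum_univ_succ] at hf
    linarith
  · have hf := hF _ (swap_34_mem w)
    simp [pF, q, cF, Fin.sum_univ_succ] at hf
    linarith
  · have hf := hF _ (swap_23_mem w)
    simp [pF, q, cF, Fin.sum_univ_succ] at hf
    linarith
  · have hf := hE _ (reflect_mem w)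
    simp [pF, pE, q, cF, cE, Fin.sum_univ_succ] at hf
    linarith
  · have hf := hE _ (self_mem_orb w)
    simp [pF, pE, q, cF, cE, Fin.sum_univ_succ] at hf
    linarith

/-- Every point of `ℝ⁷` is covered: move it to a point of least power in its orbit. -/
theorem covered (y : Fin 7 → ℝ) : Covered y := by
  obtain ⟨w, hw, hmin⟩ := exists_min_orb power power_proper y
  refine covered_of_mem_orb hw ?_
  have hle : ∀ w' ∈ orb w, power w ≤ power w' := fun w' hw' => hmin w' (orb_subset hw hw')
  rcases min_choice (pD w) (min (pE w) (pF w)) with h | h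
  · exact covered_of_power_D w fun w' hw' => h ▸ hle w' hw'
  · rcases min_choice (pE w) (pF w) with h' | h'
    · exact covered_of_power_E w fun w' hw' => (h.trans h') ▸ hle w' hw'
    · exact covered_of_power_F w fun w' hw' => (h.trans h') ▸ hle w' hw'

/-! ### A deep hole -/

/-- Convexity on the integers, in the form that drives the lower bound below. -/
theorem int_conv (n a : ℤ) : (0 : ℝ) ≤ ((n : ℝ) - a) * ((n : ℝ) - a - 1) := by
  have h : 0 ≤ (n - a) * (n - a - 1) := by
    rcases le_or_gt n a with h | h
    · nlinarith
    · have : a + 1 ≤ n := h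
      nlinarith
  exact_mod_cast h

/-- No lattice point is closer to `cD` than squared distance `15/2`. The points are written as
`l i = n i + k / 4` with `n` integral and `k ∈ {0, 1, 2, 3}`, and sorted by `k` and `N = ∑ n i`. -/
theorem deep_hole {l : Fin 7 → ℝ} (hl : l ∈ glued) : 15 / 2 ≤ q (cD - l) := by
  obtain ⟨m, hm, h⟩ := hl
  obtain ⟨k, hk0, hk3, e0, he0⟩ : ∃ k : ℤ, 0 ≤ k ∧ k ≤ 3 ∧ ∃ e, m 0 = 4 * e + k :=
    ⟨m 0 % 4, by omega, by omega, m 0 / 4, by omega⟩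
  have hn : ∀ i, ∃ n : ℤ, m i = 4 * n + k := fun i => by
    obtain ⟨d, hd⟩ := hm i 0
    exact ⟨d + e0, by linarith⟩
  choose n hn using hn
  have hl' : ∀ i, l i = n i + k / 4 := fun i => by
    rw [h i, hn i]
    push_cast
    ring
  obtain ⟨N, hN⟩ : ∃ N : ℤ, N = n 0 + n 1 + n 2 + n 3 + n 4 + n 5 + n 6 := ⟨_, rfl⟩
  have hNr : (n 6 : ℝ) = N - (n 0 + n 1 + n 2 + n 3 + n 4 + n 5) := by
    rw [hN]
    push_cast
    ring
  have hsum : ∑ i, (cD - l) i = 7 / 8 - N - 7 * k / 4 := by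
    simp [cD, hl', Fin.sum_univ_succ, hNr]
    ring
  have hS : 3 * (7 / 8 - (N : ℝ) - 7 * k / 4) ^ 2 ≤ q (cD - l) := by
    unfold q
    rw [hsum]
    have : 0 ≤ ∑ i, (cD - l) i ^ 2 := Finset.sum_nonneg fun i _ => sq_nonneg _
    linarith
  -- The coordinate sum of `l` in units of `1/4`; the sum of `cD` is `7/8`, which leaves only the
  -- layers `-2 ≤ s ≤ 9` to examine.
  obtain ⟨s, hs⟩ : ∃ s : ℤ, s = 4 * N + 7 * k := ⟨_, rfl⟩
  have hsr : (s : ℝ) = 4 * N + 7 * k := by exact_mod_cast hs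
  have hS' : 3 / 64 * (7 - 2 * (s : ℝ)) ^ 2 ≤ q (cD - l) := by
    rw [hsr]
    linarith
  rcases le_or_gt s (-3) with h1 | h1
  · have : (s : ℝ) ≤ -3 := by exact_mod_cast h1
    nlinarith
  rcases le_or_gt 10 s with h2 | h2
  · have : (10 : ℝ) ≤ s := by exact_mod_cast h2
    nlinarith
  have hq : q (cD - l) = 11 * ∑ i, (cD i - n i - k / 4) ^ 2 + 3 * (7 / 8 - N - 7 * k / 4) ^ 2 := by
    unfold q
    rw [hsum]
    congr 2
    refine Finset.sum_congr rfl fun i _ => ?_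
    simp only [Pi.sub_apply, hl' i]
    ring
  rw [hq]
  have hc : ∀ i, 0 ≤ ((n i : ℝ) - 1) * (n i - 1 - 1) ∧ 0 ≤ (n i : ℝ) * (n i - 1) ∧
      0 ≤ ((n i : ℝ) + 1) * (n i + 1 - 1) ∧ 0 ≤ ((n i : ℝ) + 2) * (n i + 2 - 1) := fun i =>
    ⟨by simpa using int_conv (n i) 1, by simpa using int_conv (n i) 0,
      by simpa using int_conv (n i) (-1), by simpa using int_conv (n i) (-2)⟩
  obtain ⟨a0, b0, c0, d0⟩ := hc 0
  obtain ⟨a1, b1, c1, d1⟩ := hc 1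
  obtain ⟨a2, b2, c2, d2⟩ := hc 2
  obtain ⟨a3, b3, c3, d3⟩ := hc 3
  obtain ⟨a4, b4, c4, d4⟩ := hc 4
  obtain ⟨a5, b5, c5, d5⟩ := hc 5
  obtain ⟨a6, b6, c6, d6⟩ := hc 6
  have hNr' : (N : ℝ) = n 0 + n 1 + n 2 + n 3 + n 4 + n 5 + n 6 := by rw [hNr]; ring
  clear hNr hS hS' hsum hl' hm hn h hc hq hsr
  have hNlo : -6 ≤ N := by omega
  have hNhi : N ≤ 2 := by omega
  simp only [Fin.sum_univ_seven, show cD 0 = 35 / 88 from rfl, show cD 1 = 35 / 88 from rfl,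
    show cD 2 = 27 / 88 from rfl, show cD 3 = 11 / 88 from rfl, show cD 4 = -5 / 88 from rfl,
    show cD 5 = -13 / 88 from rfl, show cD 6 = -13 / 88 from rfl]
  -- Within a layer the claim is linear in the `n i` and `n i ^ 2`, and follows from integer
  -- convexity at the pairs of consecutive integers around the coordinates of `cD`.
  interval_cases k <;> interval_cases N <;>
    first
    | (exfalso; omega)
    | (norm_num at hNr' ⊢; linarith)

/-! ### Transfer to the original coordinates -/

/-- The linear change of coordinates taking `Q₇^c` to `q` and `ℤ⁷` onto `glued`. -/
noncomputable def toY (x : Fin 7 → ℝ) : Fin 7 → ℝ :=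
  let s := (x 0 + x 1 + x 2 + x 3 + x 4 + x 5) / 4
  ![s, s - x 0, s - x 1, s - x 2, s - x 3, s - x 4, s - x 5 + x 6]

/-- The inverse of `toY`. -/
def ofY (y : Fin 7 → ℝ) : Fin 7 → ℝ :=
  ![y 0 - y 1, y 0 - y 2, y 0 - y 3, y 0 - y 4, y 0 - y 5,
    -y 0 + y 1 + y 2 + y 3 + y 4 + y 5, -2 * y 0 + y 1 + y 2 + y 3 + y 4 + y 5 + y 6]

theorem toY_ofY (y : Fin 7 → ℝ) : toY (ofY y) = y := by
  ext i
  fin_cases i <;> simp [toY, ofY] <;> ring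

theorem ofY_toY (x : Fin 7 → ℝ) : ofY (toY x) = x := by
  ext i
  fin_cases i <;> simp [toY, ofY] <;> ring

theorem toY_sub (x x' : Fin 7 → ℝ) : toY (x - x') = toY x - toY x' := by
  ext i
  fin_cases i <;> simp [toY] <;> ring

theorem quadForm_eq (x : Fin 7 → ℝ) : x ⬝ᵥ (Q7c *ᵥ x) = q (toY x) := by
  simp [q, toY, Q7c, dotProduct, mulVec, Fin.sum_univ_succ]
  ring

theorem toY_int_mem (v : Fin 7 → ℤ) : toY (fun i => (v i : ℝ)) ∈ glued := by
  refine mem_glued.2 ⟨fun i => v 0 + v 1 + v 2 + v 3 + v 4 + v 5 +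
    4 * (![0, -v 0, -v 1, -v 2, -v 3, -v 4, -v 5 + v 6] : Fin 7 → ℤ) i, fun i j => ?_,
    fun i => ?_⟩
  · rw [add_sub_add_left_eq_sub, ← mul_sub]
    exact dvd_mul_right _ _
  · fin_cases i <;> simp [toY] <;> ring

theorem exists_int_of_mem {l : Fin 7 → ℝ} (hl : l ∈ glued) :
    ∃ v : Fin 7 → ℤ, toY (fun i => (v i : ℝ)) = l := by
  obtain ⟨m, hm, h⟩ := hl
  choose d hd using fun i => hm i 0
  have hm' : ∀ i, (m i : ℝ) = m 0 + 4 * d i := fun i => by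
    have := hd i
    have h' : m i = m 0 + 4 * d i := by linarith
    exact_mod_cast h'
  have hd0 : d 0 = 0 := by
    have := hd 0
    linarith
  refine ⟨![-d 1, -d 2, -d 3, -d 4, -d 5, m 0 + d 1 + d 2 + d 3 + d 4 + d 5,
    m 0 + d 1 + d 2 + d 3 + d 4 + d 5 + d 6], ?_⟩
  ext i
  rw [h i, hm' i]
  fin_cases i <;> simp [toY, hd0] <;> ring

theorem Q7c_posDef : Q7c.PosDef := by
  refine PosDef.of_dotProduct_mulVec_pos ?_ fun x hx => ?_
  · ext i j
    fin_cases i <;> fin_cases j <;> simp [Q7c]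
  · rw [star_trivial, quadForm_eq]
    refine lt_of_le_of_ne (q_nonneg _) fun h0 => hx ?_
    have hy : toY x = 0 := by
      ext i
      have h1 := sq_le_q (toY x) i
      have h2 : toY x i ^ 2 = 0 := le_antisymm (by linarith) (sq_nonneg _)
      simpa using h2
    rw [← ofY_toY x, hy]
    ext i
    fin_cases i <;> simp [ofY]

theorem Q7c_det : Q7c.det = 2 * 11 ^ 6 := by
  have h : Q7c = !![1, 0, 0, 0, 0, 0, 0;
        1/12, 1, 0, 0, 0, 0, 0;
        1/12, 1/13, 1, 0, 0, 0, 0;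
        1/12, 1/13, 1/14, 1, 0, 0, 0;
        1/12, 1/13, 1/14, 1/15, 1, 0, 0;
        1/12, 1/13, 1/14, 1/15, 1/16, 1, 0;
        5/12, 5/13, 5/14, 1/3, 5/16, -11/17, 1]
      * !![12, 1, 1, 1, 1, 1, 5;
        0, 143/12, 11/12, 11/12, 11/12, 11/12, 55/12;
        0, 0, 154/13, 11/13, 11/13, 11/13, 55/13;
        0, 0, 0, 165/14, 11/14, 11/14, 55/14;
        0, 0, 0, 0, 176/15, 11/15, 11/3;
        0, 0, 0, 0, 0, 187/16, -121/16;
        0, 0, 0, 0, 0, 0, 22/17] := by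
    ext i j
    fin_cases i <;> fin_cases j <;> simp [Q7c, Matrix.mul_apply, Fin.sum_univ_succ] <;> norm_num
  rw [h, det_mul, det_of_isLowerTriangular, det_of_isUpperTriangular]
  · simp [Fin.prod_univ_succ]; norm_num
  · intro i j hij
    fin_cases i <;> fin_cases j <;> first | rfl | (exfalso; revert hij; decide)
  · intro i j hij
    fin_cases i <;> fin_cases j <;> first | rfl | (exfalso; revert hij; decide)

theorem quadForm_sub (x : Fin 7 → ℝ) (v : Fin 7 → ℤ) :
    (x - fun i => (v i : ℝ)) ⬝ᵥ (Q7c *ᵥ (x - fun i => (v i : ℝ))) =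
      q (toY x - toY fun i => (v i : ℝ)) := by
  rw [quadForm_eq, toY_sub]

theorem inhomMin_Q7c : inhomMin Q7c = 15 / 2 := by
  unfold inhomMin
  simp_rw [quadForm_sub]
  have hbdd : ∀ x : Fin 7 → ℝ,
      BddBelow (Set.range fun v : Fin 7 → ℤ => q (toY x - toY fun i => (v i : ℝ))) := by
    intro x
    refine ⟨0, ?_⟩
    rintro _ ⟨v, rfl⟩
    exact q_nonneg _
  have hle : ∀ x : Fin 7 → ℝ,
      ⨅ v : Fin 7 → ℤ, q (toY x - toY fun i => (v i : ℝ)) ≤ 15 / 2 := by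
    intro x
    obtain ⟨l, hl, hq⟩ := covered (toY x)
    obtain ⟨v, rfl⟩ := exists_int_of_mem hl
    exact (ciInf_le (hbdd x) v).trans hq
  refine le_antisymm (ciSup_le hle) ?_
  refine le_ciSup_of_le ⟨15 / 2, ?_⟩ (ofY cD) (le_ciInf fun v => ?_)
  · rintro _ ⟨x, rfl⟩
    exact hle x
  · rw [toY_ofY]
    exact deep_hole (toY_int_mem v)

/-- The matrix `Q₇^c` is positive definite with determinant `2·11⁶` and inhomogeneous
minimum `15/2`; consequently its covering density is `√((15/2)⁷/(2·11⁶))·κ₇`. -/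
theorem Q7c_det_inhomMin_covDensity :
    Q7c.PosDef ∧ Q7c.det = 2 * 11 ^ 6 ∧ inhomMin Q7c = 15 / 2 ∧
    covDensity Q7c = Real.sqrt ((15 / 2) ^ 7 / (2 * 11 ^ 6)) * unitBallVol 7 := by
  refine ⟨Q7c_posDef, Q7c_det, inhomMin_Q7c, ?_⟩
  rw [covDensity, inhomMin_Q7c, Q7c_det]
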